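/- For every $m\ge0$ and every $r\ge0$, the quantity $Z_r(m)=\sum_{p=-r}^{r}(-1)^p\,\Delta_{r+p}^m\sum_{1\le l\le m}\theta^l\Delta_{r-p}^{m-l}\,\rho_l$ satisfies the identity $Z_r(m)=\sum_{1\le k\le m}\rho_k\,\theta^kK_r(m-k)$. -/

import Mathlib

open scoped Classical

/-- `ρ 0 = 1`, `ρ n = a 1 ⋯ a n`. -/
noncomputable def rho (a : ℕ → ℝ) (n : ℕ) : ℝ := ∏ k ∈ Finset.Icc 1 n, a k

/-- `R_k^l = ∑_{s=k}^l η s · ρ l / ρ s`. -/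
noncomputable def Rkl (a η : ℕ → ℝ) (k l : ℕ) : ℝ :=
  ∑ s ∈ Finset.Icc k l, η s * (rho a l / rho a s)

/-- `T_k^l = (R_k^l)² ρ (k-1) / ρ l`. -/
noncomputable def Tkl (a η : ℕ → ℝ) (k l : ℕ) : ℝ :=
  (Rkl a η k l) ^ 2 * (rho a (k - 1) / rho a l)

/-- `Δ_r^n = ∑_{1 ≤ k₁ < ⋯ < k_r ≤ n} R_1^{k₁} R_{k₁+1}^{k₂} ⋯ R_{k_{r-1}+1}^{k_r}`
(`Δ_0^n = 1`, and `Δ_r^n = 0` for `r > n`). -/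
noncomputable def Delta (a η : ℕ → ℝ) (r n : ℕ) : ℝ :=
  ∑ k ∈ (Fintype.piFinset fun _ : Fin r => Finset.Icc 1 n).filter
      (fun k => ∀ i j : Fin r, i < j → k i < k j),
    ∏ i : Fin r, Rkl a η (if (i : ℕ) = 0 then 1 else k ⟨(i : ℕ) - 1, Nat.lt_of_le_of_lt (Nat.sub_le _ _) i.isLt⟩ + 1) (k i)

/-- `K_r(n) = ∑_{p=-r}^r (-1)^p Δ_{r+p}^n Δ_{r-p}^n`. -/
noncomputable def Kr (a η : ℕ → ℝ) (r n : ℕ) : ℝ :=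
  ∑ p ∈ Finset.Icc (-(r : ℤ)) (r : ℤ),
    (-1 : ℝ) ^ p * Delta a η ((r : ℤ) + p).toNat n * Delta a η ((r : ℤ) - p).toNat n

/-- Shift of the data: `θ^j` replaces `(a k, η k)` by `(a (k+j), η (k+j))`. -/
def shift (f : ℕ → ℝ) (j : ℕ) : ℕ → ℝ := fun k => f (k + j)


noncomputable def DeltaG (a η : ℕ → ℝ) (r j n : ℕ) : ℝ :=
  ∑ k ∈ (Fintype.piFinset fun _ : Fin r => Finset.Icc (j+1) n).filter
      (fun k => ∀ i j : Fin r, i < j → k i < k j),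
    ∏ i : Fin r, Rkl a η (if (i : ℕ) = 0 then j+1 else k ⟨(i : ℕ) - 1, Nat.lt_of_le_of_lt (Nat.sub_le _ _) i.isLt⟩ + 1) (k i)

theorem Delta_eq_G (a η : ℕ → ℝ) (r n : ℕ) : Delta a η r n = DeltaG a η r 0 n := rfl

theorem DeltaG_zero (a η : ℕ → ℝ) (j n : ℕ) : DeltaG a η 0 j n = 1 := by
  simp [DeltaG]

theorem DeltaG_succ (a η : ℕ → ℝ) (r j n : ℕ) :
    DeltaG a η (r+1) j n = ∑ k ∈ Finset.Icc (j+1) n, Rkl a η (j+1) k * DeltaG a η r k n := by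
  unfold DeltaG
  simp_rw [Finset.mul_sum]
  rw [Finset.sum_sigma']
  refine Finset.sum_bij' (fun t _ => ⟨t 0, fun i => t i.succ⟩) (fun p _ => Fin.cons p.1 p.2)
    ?_ ?_ ?_ ?_ ?_
  · intro t ht
    simp only [Finset.mem_filter, Fintype.mem_piFinset, Finset.mem_Icc, Finset.mem_sigma] at ht ⊢
    refine ⟨ht.1 0, fun i => ⟨ht.2 0 i.succ (Fin.succ_pos i), (ht.1 _).2⟩, fun i j h => ht.2 _ _ (by simpa using h)⟩
  · rintro ⟨k, u⟩ h
    simp only [Finset.mem_filter, Fintype.mem_piFinset, Finset.mem_Icc, Finset.mem_sigma] at h ⊢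
    obtain ⟨h1, h2, h3⟩ := h
    refine ⟨fun i => ?_, fun i j hij => ?_⟩
    · refine Fin.cases ?_ (fun i => ?_) i
      · simpa using h1
      · have := h2 i
        simp only [Fin.cons_succ]; omega
    · revert hij
      refine Fin.cases ?_ (fun i => ?_) i <;> refine Fin.cases ?_ (fun j => ?_) j
      · simp
      · intro _
        have := h2 j
        simp only [Fin.cons_succ, Fin.cons_zero]; omega
      · intro h; simp at h
      · intro h
        simpa using h3 i j (by simpa using h)
  · intro t _
    exact Fin.cons_self_tail t
  · rintro ⟨k, u⟩ _
    simp
  · intro t _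
    rw [Fin.prod_univ_succ]
    congr 1
    refine Finset.prod_congr rfl fun i _ => ?_
    congr 1
    by_cases h : (i : ℕ) = 0
    · have : i.castSucc = 0 := by ext; simpa using h
      simp only [Fin.val_succ, Nat.add_eq_zero_iff, h]
      simp [← this]
    · simp only [Fin.val_succ, h, if_false, Nat.add_eq_zero_iff, false_and]
      congr 2
      ext; simp; omega

theorem rho_succ' (a : ℕ → ℝ) (l : ℕ) : rho a (l+1) = a 1 * rho (shift a 1) l := by
  unfold rho shift
  induction l with
  | zero => simp
  | succ l ih => rw [Finset.prod_Icc_succ_top (by omega), ih, Finset.prod_Icc_succ_top (by omega), mul_assoc]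

theorem sum_Icc_shift (f : ℕ → ℝ) (k l : ℕ) :
    ∑ s ∈ Finset.Icc (k+1) (l+1), f s = ∑ s ∈ Finset.Icc k l, f (s+1) := by
  rw [← Finset.map_add_right_Icc, Finset.sum_map]; rfl

theorem Rkl_shift (a η : ℕ → ℝ) (h : a 1 ≠ 0) (k l : ℕ) :
    Rkl a η (k+1) (l+1) = Rkl (shift a 1) (shift η 1) k l := by
  unfold Rkl
  rw [sum_Icc_shift]
  refine Finset.sum_congr rfl fun s _ => ?_
  rw [rho_succ', rho_succ', mul_div_mul_left _ _ h]; rfl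

theorem DeltaG_shift (a η : ℕ → ℝ) (h : a 1 ≠ 0) (r j n : ℕ) :
    DeltaG a η r (j+1) (n+1) = DeltaG (shift a 1) (shift η 1) r j n := by
  induction r generalizing j with
  | zero => simp [DeltaG_zero]
  | succ r ih =>
    rw [DeltaG_succ, DeltaG_succ, sum_Icc_shift]
    refine Finset.sum_congr rfl fun s _ => ?_
    rw [ih, Rkl_shift a η h]

theorem shift_shift (a : ℕ → ℝ) (k : ℕ) : shift (shift a 1) k = shift a (k+1) := by
  funext i; simp [shift]; congr 1

theorem shift_zero (a : ℕ → ℝ) : shift a 0 = a := rfl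

theorem DeltaG_eq (a η : ℕ → ℝ) (ha : ∀ k : ℕ, 1 ≤ k → 0 < a k) (r j n : ℕ) :
    DeltaG a η r j (n + j) = Delta (shift a j) (shift η j) r n := by
  induction j generalizing a η with
  | zero => rfl
  | succ j ih =>
    rw [← add_assoc, DeltaG_shift a η (ha 1 le_rfl).ne', ih, shift_shift, shift_shift]
    intro k _; exact ha _ (by omega)

theorem Delta_zero (a η : ℕ → ℝ) (n : ℕ) : Delta a η 0 n = 1 := DeltaG_zero a η 0 n

theorem Delta_succ (a η : ℕ → ℝ) (ha : ∀ k : ℕ, 1 ≤ k → 0 < a k) (r n : ℕ) :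
    Delta a η (r+1) n = ∑ k ∈ Finset.Icc 1 n, Rkl a η 1 k * Delta (shift a k) (shift η k) r (n-k) := by
  rw [Delta_eq_G, DeltaG_succ]
  refine Finset.sum_congr rfl fun k hk => ?_
  rw [← DeltaG_eq a η ha, Nat.sub_add_cancel (Finset.mem_Icc.1 hk).2]

theorem sum_Icc_one_succ (f : ℕ → ℝ) (n : ℕ) :
    ∑ s ∈ Finset.Icc 1 (n+1), f s = f 1 + ∑ s ∈ Finset.Icc 1 n, f (s+1) := by
  rw [← sum_Icc_shift, ← Finset.add_sum_Ioc_eq_sum_Icc (by omega : 1 ≤ n+1)]; rfl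

noncomputable def EE (a η : ℕ → ℝ) (r m : ℕ) : ℝ :=
  ∑ l ∈ Finset.Icc 1 m, Delta (shift a l) (shift η l) r (m - l) * rho a l

theorem rho_zero (a : ℕ → ℝ) : rho a 0 = 1 := by simp [rho]

theorem rho_one (a : ℕ → ℝ) : rho a 1 = a 1 := by simp [rho]

theorem EE_succ (a η : ℕ → ℝ) (r m : ℕ) :
    EE a η r (m+1) = a 1 * (Delta (shift a 1) (shift η 1) r m + EE (shift a 1) (shift η 1) r m) := by
  unfold EE
  rw [sum_Icc_one_succ, rho_one, mul_add, Finset.mul_sum]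
  congr 1
  · simp [mul_comm]
  · refine Finset.sum_congr rfl fun s _ => ?_
    rw [rho_succ', shift_shift, shift_shift, Nat.add_sub_add_right]; ring

theorem Rkl_one (a η : ℕ → ℝ) (h : a 1 ≠ 0) (k : ℕ) :
    Rkl a η 1 (k+1) = η 1 * rho (shift a 1) k + Rkl (shift a 1) (shift η 1) 1 k := by
  rw [← Rkl_shift a η h]
  unfold Rkl
  rw [← Finset.add_sum_Ioc_eq_sum_Icc (by omega : 1 ≤ k+1), rho_succ', rho_one, mul_div_cancel_left₀ _ h]
  rfl

theorem Delta_succ_succ (a η : ℕ → ℝ) (ha : ∀ k : ℕ, 1 ≤ k → 0 < a k) (r n : ℕ) :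
    Delta a η (r+1) (n+1) = Delta (shift a 1) (shift η 1) (r+1) n +
      η 1 * (Delta (shift a 1) (shift η 1) r n + EE (shift a 1) (shift η 1) r n) := by
  have h := (ha 1 le_rfl).ne'
  rw [Delta_succ a η ha, Delta_succ (shift a 1) (shift η 1) (fun k _ => ha _ (by omega)),
    sum_Icc_one_succ, EE, mul_add, Finset.mul_sum]
  simp_rw [Rkl_one a η h, shift_shift, Nat.add_sub_add_right, add_mul, Finset.sum_add_distrib]
  have : Rkl (shift a 1) (shift η 1) 1 0 = 0 := by simp [Rkl]
  rw [this, rho_zero, Nat.add_sub_cancel]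
  have : ∀ x ∈ Finset.Icc 1 n, η 1 * rho (shift a 1) x * Delta (shift a (x+1)) (shift η (x+1)) r (n-x)
    = η 1 * (Delta (shift a (x+1)) (shift η (x+1)) r (n-x) * rho (shift a 1) x) := fun x _ => by ring
  rw [Finset.sum_congr rfl this]
  ring

open PowerSeries in
noncomputable def DP (a η : ℕ → ℝ) (m : ℕ) : PowerSeries ℝ := PowerSeries.mk fun r => Delta a η r m

noncomputable def EP (a η : ℕ → ℝ) (m : ℕ) : PowerSeries ℝ := PowerSeries.mk fun r => EE a η r m

noncomputable def sg : PowerSeries ℝ →+* PowerSeries ℝ := PowerSeries.rescale (-1)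

theorem sg_sg (F : PowerSeries ℝ) : sg (sg F) = F := by
  ext n; simp [sg, PowerSeries.coeff_rescale, ← mul_assoc, ← mul_pow]

theorem sg_C (c : ℝ) : sg (PowerSeries.C c) = PowerSeries.C c := by
  ext n; simp [sg, PowerSeries.coeff_rescale, PowerSeries.coeff_C]
  split_ifs with h <;> simp [h]

theorem sg_X : sg PowerSeries.X = -PowerSeries.X := by
  ext n; simp [sg, PowerSeries.coeff_rescale, PowerSeries.coeff_X]

theorem coeff_even (F : PowerSeries ℝ) (r : ℕ) :
    PowerSeries.coeff (2*r) (PowerSeries.X * (sg F * F)) = 0 := by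
  have h : sg (PowerSeries.X * (sg F * F)) = -(PowerSeries.X * (sg F * F)) := by
    rw [map_mul, map_mul, sg_sg, sg_X]; ring
  have := congrArg (PowerSeries.coeff (2*r)) h
  rw [sg, PowerSeries.coeff_rescale, pow_mul] at this
  simp only [map_neg, neg_sq, one_pow, one_mul] at this
  change PowerSeries.coeff (2*r) (PowerSeries.X * (sg F * F)) = - PowerSeries.coeff (2*r) (PowerSeries.X * (sg F * F)) at this
  linarith

theorem EP_succ (a η : ℕ → ℝ) (m : ℕ) :
    EP a η (m+1) = PowerSeries.C (a 1) * (DP (shift a 1) (shift η 1) m + EP (shift a 1) (shift η 1) m) := by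
  ext n
  simp [EP, DP, EE_succ]

theorem DP_succ (a η : ℕ → ℝ) (ha : ∀ k : ℕ, 1 ≤ k → 0 < a k) (m : ℕ) :
    DP a η (m+1) = DP (shift a 1) (shift η 1) m + PowerSeries.X * (PowerSeries.C (η 1) *
      (DP (shift a 1) (shift η 1) m + EP (shift a 1) (shift η 1) m)) := by
  ext n
  cases n with
  | zero => simp [DP, Delta_zero]
  | succ n =>
    rw [map_add, PowerSeries.coeff_succ_X_mul]
    simp [EP, DP, Delta_succ_succ a η ha]

theorem main_id (m r : ℕ) : ∀ (a η : ℕ → ℝ) (_ : ∀ k : ℕ, 1 ≤ k → 0 < a k),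
    PowerSeries.coeff (2*r) (sg (DP a η m) * EP a η m) =
    ∑ k ∈ Finset.Icc 1 m, rho a k * PowerSeries.coeff (2*r)
      (sg (DP (shift a k) (shift η k) (m-k)) * DP (shift a k) (shift η k) (m-k)) := by
  induction m with
  | zero =>
    intro a η ha
    have : EP a η 0 = 0 := by ext n; simp [EP, EE]
    simp [this]
  | succ m ih =>
    intro a η ha
    have := ih (shift a 1) (shift η 1) (fun k _ => ha _ (by omega))
    rw [sum_Icc_one_succ, rho_one]
    simp_rw [Nat.add_sub_add_right, rho_succ', mul_assoc, ← Finset.mul_sum]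
    simp_rw [shift_shift] at this
    rw [← this, DP_succ a η ha, EP_succ, Nat.add_sub_cancel]
    set D := DP (shift a 1) (shift η 1) m
    set E := EP (shift a 1) (shift η 1) m
    have : sg (D + PowerSeries.X * (PowerSeries.C (η 1) * (D + E))) * (PowerSeries.C (a 1) * (D + E))
      = PowerSeries.C (a 1) * (sg D * D + sg D * E - PowerSeries.C (η 1) * (PowerSeries.X * (sg (D+E) * (D+E)))) := by
      rw [map_add, map_mul, map_mul, sg_X, sg_C, map_add]; ring
    rw [this, PowerSeries.coeff_C_mul, map_sub, map_add, PowerSeries.coeff_C_mul, coeff_even]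
    ring

theorem sum_conv (f g : ℕ → ℝ) (r : ℕ) :
    ∑ p ∈ Finset.Icc (-(r : ℤ)) (r : ℤ), (-1 : ℝ) ^ p * f ((r : ℤ) + p).toNat * g ((r : ℤ) - p).toNat
    = (-1)^r * PowerSeries.coeff (2*r) (sg (PowerSeries.mk f) * PowerSeries.mk g) := by
  rw [PowerSeries.coeff_mul, Finset.mul_sum]
  refine Finset.sum_bij' (fun p _ => (((r : ℤ) + p).toNat, ((r : ℤ) - p).toNat))
    (fun q _ => (q.1 : ℤ) - r) ?_ ?_ ?_ ?_ ?_
  · intro p hp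
    rw [Finset.mem_Icc] at hp
    rw [Finset.HasAntidiagonal.mem_antidiagonal]; dsimp only; omega
  · intro p hp
    rw [Finset.HasAntidiagonal.mem_antidiagonal] at hp
    rw [Finset.mem_Icc]; omega
  · intro p hp
    simp only [Finset.mem_Icc] at hp ⊢; omega
  · rintro ⟨p, q⟩ hp
    rw [Finset.HasAntidiagonal.mem_antidiagonal] at hp
    simp only [Prod.mk.injEq] at hp ⊢; omega
  · intro p hp
    simp only [Finset.mem_Icc] at hp
    simp only [sg, PowerSeries.coeff_rescale, PowerSeries.coeff_mk]
    have : (-1 : ℝ) ^ p = (-1)^r * (-1) ^ ((r : ℤ) + p).toNat := by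
      obtain ⟨n, hn⟩ := Int.eq_ofNat_of_zero_le (by omega : 0 ≤ (r : ℤ) + p)
      have hp' : p = (n : ℤ) - r := by omega
      rw [hn, hp', zpow_sub₀ (by norm_num)]
      simp only [zpow_natCast, Int.toNat_natCast]
      rcases neg_one_pow_eq_or ℝ r with h | h <;> rw [h] <;> simp [div_neg]
    rw [this]; ring

/-- The identity `Z_r(m) = ∑_{1≤k≤m} ρ k · θ^k K_r(m-k)`, where
`Z_r(m) = ∑_{p=-r}^r (-1)^p Δ_{r+p}^m ∑_{1≤l≤m} θ^l Δ_{r-p}^{m-l} ρ l`. -/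
theorem stmt_18
    (a η : ℕ → ℝ) (ha : ∀ k : ℕ, 1 ≤ k → 0 < a k) :
    ∀ m r : ℕ,
      (∑ p ∈ Finset.Icc (-(r : ℤ)) (r : ℤ),
        (-1 : ℝ) ^ p * Delta a η ((r : ℤ) + p).toNat m *
          ∑ l ∈ Finset.Icc 1 m,
            Delta (shift a l) (shift η l) ((r : ℤ) - p).toNat (m - l) * rho a l) =
      ∑ k ∈ Finset.Icc 1 m, rho a k * Kr (shift a k) (shift η k) r (m - k) := by
  intro m r
  have h1 := sum_conv (fun s => Delta a η s m) (fun s => EE a η s m) r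
  have h2 := main_id m r a η ha
  unfold DP EP at h2
  unfold EE at h1 h2
  rw [h1, h2, Finset.mul_sum]
  refine Finset.sum_congr rfl fun k _ => ?_
  have h3 := sum_conv (fun s => Delta (shift a k) (shift η k) s (m-k))
    (fun s => Delta (shift a k) (shift η k) s (m-k)) r
  unfold Kr
  rw [h3]
  ring
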